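/- Let X be an ordered family of equivalences (OFE), let f : X → X be contractive, and define d : X → X → ℝ by d x y = sInf { (2 : ℝ) ^ (-(n : ℤ)) | n : ℕ, x ≈[n] y }. Then d (f x) (f y) ≤ (1/2) * d x y for all x, y : X. -/

import Mathlib

/-- An ordered family of equivalences (OFE) on a type `X`. -/
structure OFE (X : Type*) where
  rel : ℕ → X → X → Prop
  equiv : ∀ n, Equivalence (rel n)
  total_zero : ∀ x y, rel 0 x y
  mono : ∀ n x y, rel (n + 1) x y → rel n x y
  ext : ∀ x y, (∀ n, rel n x y) → x = y

/-- A sequence is Cauchy for an OFE. -/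
def OFE.IsCauchy {X : Type*} (O : OFE X) (u : ℕ → X) : Prop :=
  ∀ n, ∃ m, ∀ i j, m ≤ i → m ≤ j → O.rel n (u i) (u j)

/-- `l` is a limit of the sequence `u`. -/
def OFE.IsLimit {X : Type*} (O : OFE X) (u : ℕ → X) (l : X) : Prop :=
  ∀ n, ∃ m, ∀ i, m ≤ i → O.rel n (u i) l

/-- A complete OFE (COFE): every Cauchy sequence has a limit. -/
def OFE.IsComplete {X : Type*} (O : OFE X) : Prop :=
  ∀ u : ℕ → X, O.IsCauchy u → ∃ l, O.IsLimit u l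

/-- A function is contractive. -/
def OFE.Contractive {X : Type*} (O : OFE X) (f : X → X) : Prop :=
  ∀ n x y, O.rel n x y → O.rel (n + 1) (f x) (f y)

/-- The metric induced by an OFE. -/
noncomputable def OFE.dist {X : Type*} (O : OFE X) (x y : X) : ℝ :=
  sInf {r : ℝ | ∃ n : ℕ, O.rel n x y ∧ r = (2 : ℝ) ^ (-(n : ℤ))}

theorem contractive_dist_le_half {X : Type*} (O : OFE X)
    (f : X → X) (hf : O.Contractive f) :
    ∀ x y, O.dist (f x) (f y) ≤ (1 / 2) * O.dist x y := by
  intro x y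
  -- It suffices that `2 * d (f x) (f y)` is a lower bound of the set defining `d x y`.
  suffices h : 2 * O.dist (f x) (f y) ≤ O.dist x y by linarith
  refine le_csInf ⟨_, 0, O.total_zero x y, rfl⟩ ?_
  rintro _ ⟨n, hn, rfl⟩
  have hle : O.dist (f x) (f y) ≤ (2 : ℝ) ^ (-((n + 1 : ℕ) : ℤ)) := by
    refine csInf_le ⟨0, ?_⟩ ⟨n + 1, hf n x y hn, rfl⟩
    rintro _ ⟨m, -, rfl⟩
    positivity
  have hpow : (2 : ℝ) ^ (-(n : ℤ)) = 2 * (2 : ℝ) ^ (-((n + 1 : ℕ) : ℤ)) := by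
    rw [← zpow_one_add₀ (two_ne_zero)]
    congr 1
    push_cast
    ring
  linarith
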